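/- arXiv:1908.08550 — 9 statements merged into one kernel-verified Lean document; each statement's English description precedes it below -/
import Mathlib

section
/- Assume: (i) there exist C > 0 and r ∈ (0,1) such that for all bounded Lipschitz functions φ, ψ : X → ℂ with ∫_X φ dμ = ∫_X ψ dμ = 0 and all t ≥ 0, |∫_X φ · (ψ ∘ f_t) dμ| ≤ C r^t ‖φ‖_{Lip} ‖ψ‖_{Lip}; and (ii) there exists D > 0 such that for every bounded α-Hölder φ : X → ℂ with ∫_X φ dμ = 0 and every ε ∈ (0,1) there is a bounded Lipschitz φ_ε : X → ℂ with ∫_X φ_ε dμ = 0, sup_x |φ_ε(x) − φ(x)| ≤ ε^α ‖φ‖_{C^α}, and ‖φ_ε‖_{Lip} ≤ ε^{−D} sup_x |φ(x)|. Then there exist C' > 0 and s ∈ (0,1) such that for every bounded α-Hölder φ with ∫_X φ dμ = 0, every bounded Lipschitz ψ with ∫_X ψ dμ = 0, and every t ≥ 0, |∫_X φ · (ψ ∘ f_t) dμ| ≤ C' s^t ‖φ‖_{C^α} ‖ψ‖_{Lip}. -/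
/-!
Split `φ = φ_ε + (φ - φ_ε)` with `φ_ε` Lipschitz. The correlation of `φ_ε` with `ψ ∘ f_t` is at most
`C r^t ε^(-D) ‖φ‖ ‖ψ‖` by mixing for Lipschitz observables, and that of `φ - φ_ε` is at most
`ε^α ‖φ‖ ‖ψ‖` by the uniform bounds, `μ` being a probability measure. The choice
`ε = r^(t/(D+α)) / 2` balances the two terms: both decay like `s^t` with `s = r^(α/(D+α))`. The
factor `1/2` keeps `ε < 1` at `t = 0` and costs only the constant `2^D`.
-/

open MeasureTheory

/-- The α-Hölder norm of a function on a metric space: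
`sup_x |φ(x)| + sup_{x ≠ y} |φ(x) − φ(y)| / d(x,y)^α`.
The case `α = 1` is the Lipschitz norm. -/
noncomputable def holderNorm {X : Type*} [MetricSpace X] (α : ℝ) (φ : X → ℂ) : ℝ :=
  (⨆ x, ‖φ x‖) +
    ⨆ p : {p : X × X // p.1 ≠ p.2}, ‖φ p.val.1 - φ p.val.2‖ / dist p.val.1 p.val.2 ^ α

/-- `φ` is bounded and α-Hölder. The case `α = 1` is bounded Lipschitz. -/
def IsBoundedHolder {X : Type*} [MetricSpace X] (α : ℝ) (φ : X → ℂ) : Prop :=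
  (∃ M, ∀ x, ‖φ x‖ ≤ M) ∧ ∃ H, ∀ x y, ‖φ x - φ y‖ ≤ H * dist x y ^ α

lemma IsBoundedHolder.continuous {X : Type*} [MetricSpace X] {α : ℝ} (hα : 0 < α) {φ : X → ℂ}
    (h : IsBoundedHolder α φ) : Continuous φ := by
  obtain ⟨-, H, hH⟩ := h
  rw [continuous_iff_continuousAt]
  intro y
  rw [ContinuousAt, tendsto_iff_norm_sub_tendsto_zero]
  have hlim : Filter.Tendsto (fun x => H * dist x y ^ α) (nhds y) (nhds 0) := by
    have hc : Continuous fun x => H * dist x y ^ α :=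
      continuous_const.mul ((continuous_id.dist continuous_const).rpow_const fun _ => Or.inr hα.le)
    simpa [Real.zero_rpow hα.ne'] using hc.tendsto y
  exact squeeze_zero (fun _ => norm_nonneg _) (fun x => hH x y) hlim

lemma iSup_norm_le_holderNorm {X : Type*} [MetricSpace X] (α : ℝ) (φ : X → ℂ) :
    ⨆ x, ‖φ x‖ ≤ holderNorm α φ :=
  le_add_of_nonneg_right (Real.iSup_nonneg fun _ => by positivity)

lemma holderNorm_nonneg {X : Type*} [MetricSpace X] (α : ℝ) (φ : X → ℂ) :
    0 ≤ holderNorm α φ :=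
  (Real.iSup_nonneg fun _ => norm_nonneg _).trans (iSup_norm_le_holderNorm α φ)

lemma IsBoundedHolder.norm_le {X : Type*} [MetricSpace X] {α : ℝ} {φ : X → ℂ}
    (h : IsBoundedHolder α φ) (x : X) : ‖φ x‖ ≤ holderNorm α φ := by
  obtain ⟨⟨M, hM⟩, -⟩ := h
  have hb : BddAbove (Set.range fun x => ‖φ x‖) := ⟨M, by rintro _ ⟨y, rfl⟩; exact hM y⟩
  exact (le_ciSup hb x).trans (iSup_norm_le_holderNorm α φ)

lemma integrable_mul_comp {X : Type*} [MetricSpace X] [CompactSpace X] [MeasurableSpace X]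
    [BorelSpace X] {μ : Measure X} [IsProbabilityMeasure μ] {α β : ℝ} (hα : 0 < α) (hβ : 0 < β)
    {g : X → X} (hg : Measurable g) {φ ψ : X → ℂ} (hφ : IsBoundedHolder α φ)
    (hψ : IsBoundedHolder β ψ) : Integrable (fun x => φ x * ψ (g x)) μ := by
  refine Integrable.of_bound (C := holderNorm α φ * holderNorm β ψ) ?_ (ae_of_all _ fun x => ?_)
  · exact ((hφ.continuous hα).measurable.mul
      ((hψ.continuous hβ).measurable.comp hg)).aestronglyMeasurable
  · rw [norm_mul]
    exact mul_le_mul (hφ.norm_le x) (hψ.norm_le _) (norm_nonneg _) (holderNorm_nonneg _ _)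

/-- Exponential mixing for Lipschitz observables together with a Lipschitz approximation
property for Hölder functions yields exponential mixing for (Hölder, Lipschitz) pairs. -/
theorem stmt1 {X : Type*} [MetricSpace X] [CompactSpace X] [MeasurableSpace X] [BorelSpace X]
    (μ : Measure X) [IsProbabilityMeasure μ] (α : ℝ) (hα0 : 0 < α) (hα1 : α ≤ 1)
    (f : ℝ → X → X) (hf : ∀ t, 0 ≤ t → MeasurePreserving (f t) μ μ)
    (hmix : ∃ C : ℝ, 0 < C ∧ ∃ r : ℝ, 0 < r ∧ r < 1 ∧
      ∀ φ ψ : X → ℂ, IsBoundedHolder 1 φ → IsBoundedHolder 1 ψ →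
        (∫ x, φ x ∂μ) = 0 → (∫ x, ψ x ∂μ) = 0 → ∀ t, 0 ≤ t →
        ‖∫ x, φ x * ψ (f t x) ∂μ‖ ≤ C * r ^ t * (holderNorm 1 φ * holderNorm 1 ψ))
    (happrox : ∃ D : ℝ, 0 < D ∧
      ∀ φ : X → ℂ, IsBoundedHolder α φ → (∫ x, φ x ∂μ) = 0 →
        ∀ ε : ℝ, 0 < ε → ε < 1 →
        ∃ φε : X → ℂ, IsBoundedHolder 1 φε ∧ (∫ x, φε x ∂μ) = 0 ∧
          (∀ x, ‖φε x - φ x‖ ≤ ε ^ α * holderNorm α φ) ∧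
          holderNorm 1 φε ≤ ε ^ (-D) * ⨆ x, ‖φ x‖) :
    ∃ C' : ℝ, 0 < C' ∧ ∃ s : ℝ, 0 < s ∧ s < 1 ∧
      ∀ φ ψ : X → ℂ, IsBoundedHolder α φ → (∫ x, φ x ∂μ) = 0 →
        IsBoundedHolder 1 ψ → (∫ x, ψ x ∂μ) = 0 → ∀ t, 0 ≤ t →
        ‖∫ x, φ x * ψ (f t x) ∂μ‖ ≤ C' * s ^ t * (holderNorm α φ * holderNorm 1 ψ) := by
  obtain ⟨C, hC, r, hr0, hr1, hmix⟩ := hmix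
  obtain ⟨D, hD, happrox⟩ := happrox
  have hDα : 0 < D + α := by positivity
  refine ⟨C * 2 ^ D + 1, by positivity, r ^ (α / (D + α)), by positivity,
    Real.rpow_lt_one hr0.le hr1 (by positivity), ?_⟩
  intro φ ψ hφ hφ0 hψ hψ0 t ht
  set A := holderNorm α φ
  set B := holderNorm 1 ψ
  have hA : 0 ≤ A := holderNorm_nonneg _ _
  have hB : 0 ≤ B := holderNorm_nonneg _ _
  set q : ℝ := r ^ (t / (D + α)) with hq
  have hq0 : 0 < q := by positivity
  have hq1 : q ≤ 1 := Real.rpow_le_one hr0.le hr1.le (by positivity)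
  have hst : (r ^ (α / (D + α))) ^ t = q ^ α := by
    rw [hq, ← Real.rpow_mul hr0.le, ← Real.rpow_mul hr0.le]
    congr 1
    ring
  have hrt : r ^ t = q ^ α * q ^ D := by
    rw [← Real.rpow_add hq0, hq, ← Real.rpow_mul hr0.le]
    congr 1
    field_simp
    ring
  have hεD : (q / 2) ^ (-D) * q ^ D = 2 ^ D := by
    rw [Real.rpow_neg (by positivity), Real.div_rpow hq0.le (by norm_num)]
    have := (Real.rpow_pos_of_pos hq0 D).ne'
    field_simp
  have hεα : (q / 2) ^ α ≤ q ^ α :=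
    Real.rpow_le_rpow (by positivity) (by linarith) hα0.le
  obtain ⟨φε, hφε, hφε0, hclose, hnorm⟩ :=
    happrox φ hφ hφ0 (q / 2) (by positivity) (by linarith)
  have hnorm' : holderNorm 1 φε ≤ (q / 2) ^ (-D) * A :=
    hnorm.trans (by gcongr; exact iSup_norm_le_holderNorm α φ)
  have hft := (hf t ht).measurable
  have hsplit : ∫ x, φ x * ψ (f t x) ∂μ =
      (∫ x, φε x * ψ (f t x) ∂μ) - ∫ x, (φε x - φ x) * ψ (f t x) ∂μ := by
    simp only [sub_mul]
    rw [integral_sub (integrable_mul_comp one_pos one_pos hft hφε hψ)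
      (integrable_mul_comp hα0 one_pos hft hφ hψ), sub_sub_cancel]
  have hmain : ‖∫ x, φε x * ψ (f t x) ∂μ‖ ≤ C * 2 ^ D * q ^ α * (A * B) :=
    calc ‖∫ x, φε x * ψ (f t x) ∂μ‖ ≤ C * r ^ t * (holderNorm 1 φε * B) :=
          hmix φε ψ hφε hψ hφε0 hψ0 t ht
      _ ≤ C * r ^ t * ((q / 2) ^ (-D) * A * B) := by gcongr
      _ = C * ((q / 2) ^ (-D) * q ^ D) * q ^ α * (A * B) := by rw [hrt]; ring
      _ = C * 2 ^ D * q ^ α * (A * B) := by rw [hεD]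
  have herr : ‖∫ x, (φε x - φ x) * ψ (f t x) ∂μ‖ ≤ q ^ α * (A * B) := by
    have h := norm_integral_le_of_norm_le_const (μ := μ) (C := q ^ α * (A * B))
      (f := fun x => (φε x - φ x) * ψ (f t x)) (ae_of_all _ fun x => ?_)
    · simpa using h
    · rw [norm_mul, ← mul_assoc]
      exact mul_le_mul ((hclose x).trans (by gcongr)) (hψ.norm_le _) (norm_nonneg _)
        (by positivity)
  rw [hsplit, hst]
  calc _ ≤ _ := norm_sub_le _ _
    _ ≤ C * 2 ^ D * q ^ α * (A * B) + q ^ α * (A * B) := add_le_add hmain herr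
    _ = (C * 2 ^ D + 1) * q ^ α * (A * B) := by ring
end

section
/- Let V be a real inner product space and let v, w ∈ V be nonzero. Then ‖v + w‖² = (‖v‖ + ‖w‖)² − ‖v/‖v‖ − w/‖w‖‖² · ‖v‖ · ‖w‖. -/
/-- Polarization identity underlying Proposition 4.3 of the paper: for nonzero vectors
`v, w` in a real inner product space,
`‖v + w‖² = (‖v‖ + ‖w‖)² − ‖v̂ − ŵ‖² ‖v‖ ‖w‖`, where `v̂, ŵ` are the unit vectors
in the directions of `v` and `w`. -/
theorem stmt3 {V : Type*} [NormedAddCommGroup V] [InnerProductSpace ℝ V]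
    (v w : V) (hv : v ≠ 0) (hw : w ≠ 0) :
    ‖v + w‖ ^ 2 = (‖v‖ + ‖w‖) ^ 2 - ‖(‖v‖⁻¹ • v) - (‖w‖⁻¹ • w)‖ ^ 2 * ‖v‖ * ‖w‖ := by
  have hv' : ‖v‖ ≠ 0 := norm_ne_zero_iff.mpr hv
  have hw' : ‖w‖ ≠ 0 := norm_ne_zero_iff.mpr hw
  -- Both sides expand to `‖v‖² + 2⟪v, w⟫ + ‖w‖²`.
  rw [norm_add_sq_real, norm_sub_sq_real, real_inner_smul_left, real_inner_smul_right,
    norm_smul, norm_smul, norm_inv, norm_inv, norm_norm, norm_norm]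
  field_simp
  ring
end

section
/- Let V be a real inner product space, let v, w ∈ V be nonzero, and let ε ≥ 0. If ‖v/‖v‖ − w/‖w‖‖ ≥ ε, then ‖v + w‖² ≤ (‖v‖ + ‖w‖)² − ε² ‖v‖ ‖w‖. -/
/-- Quantitative defect in the triangle inequality (Proposition 4.3 of the paper): if the
unit vectors in the directions of nonzero `v` and `w` are at distance at least `ε`, then
`‖v + w‖² ≤ (‖v‖ + ‖w‖)² − ε² ‖v‖ ‖w‖`. -/
theorem stmt4 {V : Type*} [NormedAddCommGroup V] [InnerProductSpace ℝ V]
    (v w : V) (hv : v ≠ 0) (hw : w ≠ 0) (ε : ℝ) (hε : 0 ≤ ε)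
    (hsep : ε ≤ ‖(‖v‖⁻¹ • v) - (‖w‖⁻¹ • w)‖) :
    ‖v + w‖ ^ 2 ≤ (‖v‖ + ‖w‖) ^ 2 - ε ^ 2 * ‖v‖ * ‖w‖ := by
  have ha : 0 < ‖v‖ := norm_pos_iff.mpr hv
  have hb : 0 < ‖w‖ := norm_pos_iff.mpr hw
  -- By the law of cosines this is exactly the defect `(‖v‖ + ‖w‖)² − ‖v + w‖²`.
  have key : ‖(‖v‖⁻¹ • v) - (‖w‖⁻¹ • w)‖ ^ 2 * (‖v‖ * ‖w‖)
      = 2 * (‖v‖ * ‖w‖) - 2 * inner ℝ v w := by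
    rw [norm_sub_sq_real, norm_smul, norm_smul, real_inner_smul_left, real_inner_smul_right,
      norm_inv, norm_inv, norm_norm, norm_norm]
    field_simp
    ring
  have hsq : ε ^ 2 * (‖v‖ * ‖w‖) ≤ ‖(‖v‖⁻¹ • v) - (‖w‖⁻¹ • w)‖ ^ 2 * (‖v‖ * ‖w‖) := by
    gcongr
  rw [norm_add_sq_real]
  linarith
end

section
/- Let V be a real inner product space, let v, w ∈ V be nonzero, and let ε ∈ [0, 2]. If ‖v/‖v‖ − w/‖w‖‖ ≥ ε and ‖v‖ ≤ ‖w‖, then ‖v + w‖ ≤ (1 − ε²/4) ‖v‖ + ‖w‖. -/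
/-!
Write `t = ε² / 4`. Expanding the squared distance between the unit vectors turns the separation
hypothesis into `⟪v, w⟫ ≤ (1 - 2t) ‖v‖ ‖w‖`. Both sides of the conclusion are nonnegative, so they
can be compared through their squares: the square of the right side exceeds `‖v + w‖²` by at least
`t ‖v‖ (t ‖v‖ + 2 (‖w‖ - ‖v‖))`, which is nonnegative because `‖v‖ ≤ ‖w‖`.
-/

/-- Proposition 4.3 of the paper in linear form: if the unit vectors in the directions of
nonzero `v` and `w` are at distance at least `ε ∈ [0,2]` and `‖v‖ ≤ ‖w‖`, then
`‖v + w‖ ≤ (1 − ε²/4) ‖v‖ + ‖w‖`. -/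
theorem stmt5 {V : Type*} [NormedAddCommGroup V] [InnerProductSpace ℝ V]
    (v w : V) (hv : v ≠ 0) (hw : w ≠ 0) (ε : ℝ) (hε0 : 0 ≤ ε) (hε2 : ε ≤ 2)
    (hsep : ε ≤ ‖(‖v‖⁻¹ • v) - (‖w‖⁻¹ • w)‖) (hvw : ‖v‖ ≤ ‖w‖) :
    ‖v + w‖ ≤ (1 - ε ^ 2 / 4) * ‖v‖ + ‖w‖ := by
  have ha : 0 < ‖v‖ := norm_pos_iff.mpr hv
  have hb : 0 < ‖w‖ := norm_pos_iff.mpr hw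
  have hsq : ε ^ 2 ≤ ‖(‖v‖⁻¹ • v) - (‖w‖⁻¹ • w)‖ ^ 2 := pow_le_pow_left₀ hε0 hsep 2
  have hexp : ‖(‖v‖⁻¹ • v) - (‖w‖⁻¹ • w)‖ ^ 2 = 2 - 2 * (inner ℝ v w / (‖v‖ * ‖w‖)) := by
    rw [norm_sub_sq_real, norm_smul, norm_smul, real_inner_smul_left, real_inner_smul_right,
      norm_inv, norm_inv, norm_norm, norm_norm]
    field_simp
    ring
  have hinner : inner ℝ v w ≤ (1 - ε ^ 2 / 2) * (‖v‖ * ‖w‖) := by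
    rw [← div_le_iff₀ (mul_pos ha hb)]
    linarith
  have hsum := norm_add_sq_real v w
  obtain ⟨t, ht⟩ : ∃ t, t = ε ^ 2 / 4 := ⟨_, rfl⟩
  have ht0 : 0 ≤ t := by rw [ht]; positivity
  have ht1 : t ≤ 1 := by rw [ht]; nlinarith
  rw [show ε ^ 2 / 2 = 2 * t by rw [ht]; ring] at hinner
  rw [← ht]
  have hrhs : 0 ≤ (1 - t) * ‖v‖ + ‖w‖ :=
    add_nonneg (mul_nonneg (sub_nonneg.mpr ht1) ha.le) hb.le
  refine (sq_le_sq₀ (norm_nonneg _) hrhs).mp ?_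
  -- The difference of squares is at least `t‖v‖ (t‖v‖ + 2(‖w‖ - ‖v‖))`.
  have hgap : 0 ≤ t * ‖v‖ * (t * ‖v‖ + 2 * (‖w‖ - ‖v‖)) :=
    mul_nonneg (mul_nonneg ht0 ha.le)
      (add_nonneg (mul_nonneg ht0 ha.le) (mul_nonneg zero_le_two (sub_nonneg.mpr hvw)))
  nlinarith
end

section
/- For every ε ∈ (0, 1/8) there exists a constant C > 0 such that for every x ∈ ℝ, the function y ↦ (1 + |x + y|)^{−(1/2 − ε)} (1 + |y|)^{−1} is Lebesgue-integrable on ℝ and ∫_ℝ (1 + |x + y|)^{−(1/2 − ε)} (1 + |y|)^{−1} dy ≤ C (1 + |x|)^{−(1/2 − 2ε)}. -/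
open MeasureTheory

/-!
Write `A = 1 + |x + y|`, `B = 1 + |y|`, `X = 1 + |x|`. Since `X ≤ A + B`, the larger of `A` and `B`
is at least `X / 2`. Moving all of the exponent except `1/2 - 2ε` from the larger of the two onto
the smaller one leaves exactly `1 + ε` on the latter, so the integrand is at most
`(X / 2) ^ (-(1/2 - 2ε)) * (A ^ (-(1 + ε)) + B ^ (-(1 + ε)))` (`kernel_le`). Both summands are
integrable in `y` and, by translation invariance, have the same integral, independent of `x`.
-/

/-- If `0 < S ≤ L`, decay in the larger variable `L` may be traded for decay in the smaller
variable `S`, keeping only `L ^ (-b)`. -/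
lemma rpow_mul_rpow_le_of_le {S L p q b : ℝ} (hS : 0 < S) (h : S ≤ L) (hb : b ≤ q) :
    S ^ (-p) * L ^ (-q) ≤ L ^ (-b) * S ^ (-(p + q - b)) := by
  have hL : 0 < L := hS.trans_le h
  have e1 : L ^ (-q) = L ^ (-b) * L ^ (-(q - b)) := by
    rw [← Real.rpow_add hL]; congr 1; ring
  have e2 : S ^ (-(p + q - b)) = S ^ (-p) * S ^ (-(q - b)) := by
    rw [← Real.rpow_add hS]; congr 1; ring
  have h1 : L ^ (-(q - b)) ≤ S ^ (-(q - b)) :=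
    Real.rpow_le_rpow_of_nonpos hS h (by linarith)
  rw [e1, e2]
  calc S ^ (-p) * (L ^ (-b) * L ^ (-(q - b)))
      ≤ S ^ (-p) * (L ^ (-b) * S ^ (-(q - b))) := by gcongr
    _ = _ := by ring

lemma kernel_le {ε : ℝ} (hε0 : 0 < ε) (hε1 : ε < 1 / 8) {A B X : ℝ} (hA : 0 < A) (hB : 0 < B)
    (hX : 0 < X) (h : X ≤ A + B) :
    A ^ (-(1 / 2 - ε)) * B⁻¹ ≤
      (X / 2) ^ (-(1 / 2 - 2 * ε)) * (A ^ (-(1 + ε)) + B ^ (-(1 + ε))) := by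
  have hA' : 0 ≤ A ^ (-(1 + ε)) := by positivity
  have hB' : 0 ≤ B ^ (-(1 + ε)) := by positivity
  have anti : ∀ {L : ℝ}, X / 2 ≤ L →
      L ^ (-(1 / 2 - 2 * ε)) ≤ (X / 2) ^ (-(1 / 2 - 2 * ε)) := fun hL =>
    Real.rpow_le_rpow_of_nonpos (by positivity) hL (by linarith)
  rw [← Real.rpow_neg_one B]
  rcases le_total A B with hAB | hAB
  · have key := rpow_mul_rpow_le_of_le (p := 1 / 2 - ε) (q := 1) (b := 1 / 2 - 2 * ε) hA hAB
      (by linarith)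
    rw [show 1 / 2 - ε + 1 - (1 / 2 - 2 * ε) = 1 + ε by ring] at key
    exact key.trans (mul_le_mul (anti (by linarith)) (by linarith) hA' (by positivity))
  · have key := rpow_mul_rpow_le_of_le (p := 1) (q := 1 / 2 - ε) (b := 1 / 2 - 2 * ε) hB hAB
      (by linarith)
    rw [show 1 + (1 / 2 - ε) - (1 / 2 - 2 * ε) = 1 + ε by ring, mul_comm] at key
    exact key.trans (mul_le_mul (anti (by linarith)) (by linarith) hB' (by positivity))

/-- Key one-variable decay estimate of the paper's integral convergence lemma: for
`ε ∈ (0, 1/8)` there is `C > 0` such that for every `x ∈ ℝ`, the function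
`y ↦ (1 + |x + y|)^{−(1/2 − ε)} (1 + |y|)⁻¹` is integrable on `ℝ` and its integral is at
most `C (1 + |x|)^{−(1/2 − 2ε)}`. -/
theorem stmt7 (ε : ℝ) (hε0 : 0 < ε) (hε1 : ε < 1 / 8) :
    ∃ C : ℝ, 0 < C ∧ ∀ x : ℝ,
      Integrable (fun y : ℝ => (1 + |x + y|) ^ (-(1 / 2 - ε)) * (1 + |y|)⁻¹) ∧
      (∫ y : ℝ, (1 + |x + y|) ^ (-(1 / 2 - ε)) * (1 + |y|)⁻¹) ≤
        C * (1 + |x|) ^ (-(1 / 2 - 2 * ε)) := by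
  set I : ℝ := ∫ y : ℝ, (1 + |y|) ^ (-(1 + ε)) with hI
  have hI0 : 0 ≤ I := integral_nonneg fun y => by positivity
  have hint : Integrable (fun y : ℝ => (1 + |y|) ^ (-(1 + ε))) := by
    have := integrable_one_add_norm (E := ℝ) (μ := volume) (r := 1 + ε) (by simpa using hε0)
    simpa only [Real.norm_eq_abs] using this
  -- The summand `1` makes positivity of the constant immediate, without showing `0 < I`.
  refine ⟨(1 / 2) ^ (-(1 / 2 - 2 * ε)) * (I + I) + 1, by positivity, fun x => ?_⟩
  have hintx : Integrable (fun y : ℝ => (1 + |x + y|) ^ (-(1 + ε))) := hint.comp_add_left x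
  have hIx : ∫ y : ℝ, (1 + |x + y|) ^ (-(1 + ε)) = I :=
    integral_add_left_eq_self (fun y : ℝ => (1 + |y|) ^ (-(1 + ε))) x
  have hbound : ∀ y : ℝ, (1 + |x + y|) ^ (-(1 / 2 - ε)) * (1 + |y|)⁻¹ ≤
      ((1 + |x|) / 2) ^ (-(1 / 2 - 2 * ε)) *
        ((1 + |x + y|) ^ (-(1 + ε)) + (1 + |y|) ^ (-(1 + ε))) := fun y => by
    refine kernel_le hε0 hε1 (by positivity) (by positivity) (by positivity) ?_
    have : |x| ≤ |x + y| + |y| := by simpa using abs_sub (x + y) y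
    linarith
  have hdom := (hintx.add hint).const_mul (((1 + |x|) / 2) ^ (-(1 / 2 - 2 * ε)))
  have hf : Integrable (fun y : ℝ => (1 + |x + y|) ^ (-(1 / 2 - ε)) * (1 + |y|)⁻¹) := by
    refine hdom.mono' (Measurable.aestronglyMeasurable (by fun_prop)) (ae_of_all _ fun y => ?_)
    rw [Real.norm_of_nonneg (by positivity)]
    exact hbound y
  refine ⟨hf, (integral_mono hf hdom hbound).trans ?_⟩
  have hsum : ∫ y : ℝ, ((1 + |x|) / 2) ^ (-(1 / 2 - 2 * ε)) *
      ((1 + |x + y|) ^ (-(1 + ε)) + (1 + |y|) ^ (-(1 + ε))) =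
      ((1 + |x|) / 2) ^ (-(1 / 2 - 2 * ε)) * (I + I) := by
    rw [integral_const_mul, integral_add hintx hint, hIx]
  refine hsum.le.trans ?_
  rw [div_eq_mul_one_div, Real.mul_rpow (by positivity) (by norm_num)]
  have : 0 ≤ (1 + |x|) ^ (-(1 / 2 - 2 * ε)) := by positivity
  linarith
end

section
/- For every ε ∈ (0, 1/2) there exists a constant C > 0 such that for all real x ≥ 0, the function y ↦ (1 − (x + y))^{−(1/2 − ε)} (1 − y)^{−1} is Lebesgue-integrable on (−∞, −x] and ∫_{−∞}^{−x} (1 − (x + y))^{−(1/2 − ε)} (1 − y)^{−1} dy ≤ C (1 + x)^{−(1/2 − ε)}. -/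
/-!
Put `a = 1/2 - ε ∈ (0, 1/2)` and `X = 1 + x`. In the variable `u = -x - y > 0` the integrand is
`(1 + u)^(-a) (X + u)⁻¹ ≤ u^(-a) (X + u)⁻¹`, and the right side is exactly
`X^(-a) X⁻¹ h(u / X)` with the profile `h s = s^(-a) (1 + s)⁻¹`. The profile is integrable on
`(0, ∞)`: it is at most `s^(-a)` near `0` and at most `s^(-a-1)` near infinity. Rescaling by `X`
then gives the bound `X^(-a) ∫ h`, where `∫ h` depends only on `ε`.
-/

open MeasureTheory

/-- The profile `s^(-a) (1 + s)⁻¹` on `(0, ∞)`, extended by zero to the whole line so that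
the translation, reflection and scaling invariance of Lebesgue measure apply directly. -/
noncomputable def profile (a : ℝ) : ℝ → ℝ :=
  (Set.Ioi (0 : ℝ)).indicator fun s => s ^ (-a) * (1 + s)⁻¹

lemma profile_nonneg (a s : ℝ) : 0 ≤ profile a s := by
  refine Set.indicator_nonneg (fun t (ht : 0 < t) => ?_) s
  positivity

lemma integrable_profile {a : ℝ} (ha0 : 0 < a) (ha1 : a < 1) : Integrable (profile a) := by
  have hm : Measurable fun s : ℝ => s ^ (-a) * (1 + s)⁻¹ := by fun_prop
  refine (integrable_indicator_iff measurableSet_Ioi).2 ?_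
  rw [← Set.Ioc_union_Ioi_eq_Ioi (zero_le_one' ℝ)]
  refine IntegrableOn.union ?_ ?_
  · have h : IntegrableOn (fun s : ℝ => s ^ (-a)) (Set.Ioc 0 1) :=
      (intervalIntegrable_iff_integrableOn_Ioc_of_le zero_le_one).1
        (intervalIntegral.intervalIntegrable_rpow' (by linarith))
    refine Integrable.mono' h hm.aestronglyMeasurable ?_
    refine (ae_restrict_iff' measurableSet_Ioc).2 (ae_of_all _ fun s hs => ?_)
    have hs0 : 0 < s := hs.1
    rw [Real.norm_of_nonneg (by positivity)]
    exact mul_le_of_le_one_right (by positivity) (inv_le_one_of_one_le₀ (by linarith))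
  · have h : IntegrableOn (fun s : ℝ => s ^ (-a - 1)) (Set.Ioi 1) :=
      integrableOn_Ioi_rpow_of_lt (by linarith) one_pos
    refine Integrable.mono' h hm.aestronglyMeasurable ?_
    refine (ae_restrict_iff' measurableSet_Ioi).2 (ae_of_all _ fun s hs => ?_)
    have hs0 : 0 < s := one_pos.trans hs
    rw [Real.norm_of_nonneg (by positivity), Real.rpow_sub_one hs0.ne', div_eq_mul_inv]
    gcongr
    linarith

lemma integrand_le_profile {a x y : ℝ} (ha : 0 < a) (hx : 0 ≤ x) (hy : y < -x) :
    (1 - (x + y)) ^ (-a) * (1 - y)⁻¹ ≤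
      (1 + x) ^ (-a) * (1 + x)⁻¹ * profile a ((-x - y) / (1 + x)) := by
  obtain ⟨u, rfl⟩ : ∃ u, y = -x - u := ⟨-x - y, by ring⟩
  have hu : 0 < u := by linarith
  have hX : 0 < 1 + x := by linarith
  have hq : 0 < u / (1 + x) := by positivity
  have e0 : -x - (-x - u) = u := by ring
  have e1 : 1 - (x + (-x - u)) = 1 + u := by ring
  have e2 : 1 - (-x - u) = (1 + x) * (1 + u / (1 + x)) := by field_simp; ring
  have e3 : (1 + x) ^ (-a) * (u / (1 + x)) ^ (-a) = u ^ (-a) := by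
    rw [← Real.mul_rpow hX.le hq.le, mul_div_cancel₀ _ hX.ne']
  rw [e0, e1, e2, profile, Set.indicator_of_mem (Set.mem_Ioi.2 hq), mul_inv]
  calc (1 + u) ^ (-a) * ((1 + x)⁻¹ * (1 + u / (1 + x))⁻¹)
      ≤ u ^ (-a) * ((1 + x)⁻¹ * (1 + u / (1 + x))⁻¹) :=
        mul_le_mul_of_nonneg_right
          (Real.rpow_le_rpow_of_nonpos hu (by linarith) (by linarith)) (by positivity)
    _ = _ := by rw [← e3]; ring

/-- First regional estimate in the proof of the paper's integral convergence lemma (the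
region where `x + y` and `y` are both negative): for `ε ∈ (0, 1/2)` there is `C > 0` such
that for all `x ≥ 0`, the function `y ↦ (1 − (x+y))^{−(1/2−ε)} (1−y)⁻¹` is integrable on
`(−∞, −x]` and `∫_{−∞}^{−x} (1 − (x+y))^{−(1/2−ε)} (1−y)⁻¹ dy ≤ C (1+x)^{−(1/2−ε)}`. -/
theorem stmt9 (ε : ℝ) (hε0 : 0 < ε) (hε1 : ε < 1 / 2) :
    ∃ C : ℝ, 0 < C ∧ ∀ x : ℝ, 0 ≤ x →
      IntegrableOn (fun y : ℝ => (1 - (x + y)) ^ (-(1 / 2 - ε)) * (1 - y)⁻¹)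
        (Set.Iic (-x)) ∧
      (∫ y in Set.Iic (-x), (1 - (x + y)) ^ (-(1 / 2 - ε)) * (1 - y)⁻¹) ≤
        C * (1 + x) ^ (-(1 / 2 - ε)) := by
  obtain ⟨a, ha⟩ : ∃ a, a = 1 / 2 - ε := ⟨_, rfl⟩
  rw [← ha]
  have ha0 : 0 < a := by linarith
  have hP := integrable_profile ha0 (by linarith)
  have hP0 : 0 ≤ ∫ s, profile a s := integral_nonneg (profile_nonneg a)
  refine ⟨(∫ s, profile a s) + 1, by linarith, fun x hx => ?_⟩
  have hX : 0 < 1 + x := by linarith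
  set G : ℝ → ℝ := fun y => (1 + x) ^ (-a) * (1 + x)⁻¹ * profile a ((-x - y) / (1 + x)) with hG
  have hG0 : ∀ y, 0 ≤ G y := fun y => mul_nonneg (by positivity) (profile_nonneg a _)
  have hGi : Integrable G := ((hP.comp_div hX.ne').comp_sub_left (-x)).const_mul _
  have hGint : ∫ y, G y = (1 + x) ^ (-a) * ∫ s, profile a s := by
    rw [hG, integral_const_mul,
      integral_sub_left_eq_self (fun u => profile a (u / (1 + x))) volume (-x),
      Measure.integral_comp_div, abs_of_pos hX, smul_eq_mul]
    field_simp
  -- The endpoint `y = -x`, where the profile vanishes, is discarded as a null set.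
  rw [integrableOn_Iic_iff_integrableOn_Iio, integral_Iic_eq_integral_Iio]
  have hfi : IntegrableOn (fun y : ℝ => (1 - (x + y)) ^ (-a) * (1 - y)⁻¹) (Set.Iio (-x)) := by
    refine Integrable.mono' hGi.integrableOn
      (Measurable.aestronglyMeasurable (by fun_prop)) ?_
    refine (ae_restrict_iff' measurableSet_Iio).2 (ae_of_all _ fun y (hy : y < -x) => ?_)
    have h1 : 0 < 1 - (x + y) := by linarith
    have h2 : 0 < 1 - y := by linarith
    rw [Real.norm_of_nonneg (by positivity)]
    exact integrand_le_profile ha0 hx hy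
  refine ⟨hfi, ?_⟩
  calc ∫ y in Set.Iio (-x), (1 - (x + y)) ^ (-a) * (1 - y)⁻¹
      ≤ ∫ y in Set.Iio (-x), G y :=
        setIntegral_mono_on hfi hGi.integrableOn measurableSet_Iio
          fun y hy => integrand_le_profile ha0 hx hy
    _ ≤ ∫ y, G y := setIntegral_le_integral hGi (ae_of_all _ hG0)
    _ = (1 + x) ^ (-a) * ∫ s, profile a s := hGint
    _ ≤ _ := by
      have : 0 ≤ (1 + x) ^ (-a) := by positivity
      linarith
end

section
/- For every ε ∈ (0, 1/8) there exists a constant C > 0 such that for all real x ≥ 0, ∫_{−x}^{0} (1 + (x + y))^{−(1/2 − ε)} (1 − y)^{−1} dy ≤ C (1 + x)^{−(1/2 − 2ε)}. -/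
open MeasureTheory

/-!
Write `u = 1 + (x + y)`, `v = 1 - y` and `T = 1 + x`, so that `1 ≤ u, v ≤ T` and `u + v = T + 1`;
in particular one of `u`, `v` is at least `T / 2`. With `a = 1/2 - ε`, giving up a factor `T ^ ε`
turns the integrand into integrable powers, symmetrically in `u` and `v`:
`u ^ (-a) * v⁻¹ ≤ 2 * T ^ (-(a - ε)) * (u ^ (-1 - ε) + v ^ (-1 - ε))`.
Each of the two powers has integral at most `∫₁^∞ t ^ (-1 - ε) dt = 1 / ε` over `[-x, 0]`, so
`C = 4 / ε` works.
-/

/-- The pointwise bound. If `v ≥ T / 2`, bound `v⁻¹` by `2 / T` and `u ^ (1 + ε - a)` by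
`T ^ (1 + ε - a)`; if `u ≥ T / 2`, bound `u ^ (-a)` by `2 * T ^ (-a)` and `v ^ ε` by `T ^ ε`. -/
lemma rpow_mul_inv_le_of_add_ge {ε a u v T : ℝ} (hε : 0 < ε) (ha : 0 < a) (ha1 : a ≤ 1)
    (hu : 1 ≤ u) (hv : 1 ≤ v) (huT : u ≤ T) (hvT : v ≤ T) (h : T ≤ u + v) :
    u ^ (-a) * v⁻¹ ≤ 2 * T ^ (-(a - ε)) * (u ^ (-1 - ε) + v ^ (-1 - ε)) := by
  have hT : 0 < T := by linarith
  have hu0 : 0 < u := by linarith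
  have hv0 : 0 < v := by linarith
  have hU : 0 < u ^ (-1 - ε) := Real.rpow_pos_of_pos hu0 _
  have hV : 0 < v ^ (-1 - ε) := Real.rpow_pos_of_pos hv0 _
  have hP : 0 < T ^ (-(a - ε)) := Real.rpow_pos_of_pos hT _
  rcases le_total u v with huv | huv
  · have h1 : v⁻¹ ≤ 2 * T ^ (-1 : ℝ) := by
      rw [Real.rpow_neg_one, ← div_eq_mul_inv, inv_le_comm₀ hv0 (by positivity), inv_div]
      linarith
    have h2 : u ^ (-a) ≤ u ^ (-1 - ε) * T ^ (1 + ε - a) := by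
      calc u ^ (-a) = u ^ (-1 - ε) * u ^ (1 + ε - a) := by
            rw [← Real.rpow_add hu0]; congr 1; ring
        _ ≤ _ := by
            gcongr
            linarith
    calc u ^ (-a) * v⁻¹ ≤ (u ^ (-1 - ε) * T ^ (1 + ε - a)) * (2 * T ^ (-1 : ℝ)) := by gcongr
      _ = 2 * (T ^ (1 + ε - a) * T ^ (-1 : ℝ)) * u ^ (-1 - ε) := by ring
      _ = 2 * T ^ (-(a - ε)) * u ^ (-1 - ε) := by
          rw [← Real.rpow_add hT]; congr 3; ring
      _ ≤ _ := by gcongr; linarith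
  · have h1 : u ^ (-a) ≤ 2 * T ^ (-a) := by
      calc u ^ (-a) ≤ (T / 2) ^ (-a) :=
            Real.rpow_le_rpow_of_nonpos (by positivity) (by linarith) (by linarith)
        _ = 2 ^ a * T ^ (-a) := by
            rw [Real.div_rpow hT.le (by norm_num), Real.rpow_neg (by norm_num : (0 : ℝ) ≤ 2),
              div_inv_eq_mul, mul_comm]
        _ ≤ 2 ^ (1 : ℝ) * T ^ (-a) := by
            gcongr
            norm_num
        _ = _ := by rw [Real.rpow_one]
    have h2 : v⁻¹ ≤ v ^ (-1 - ε) * T ^ ε := by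
      calc v⁻¹ = v ^ (-1 - ε) * v ^ ε := by
            rw [← Real.rpow_add hv0, ← Real.rpow_neg_one]; congr 1; ring
        _ ≤ _ := by gcongr
    calc u ^ (-a) * v⁻¹ ≤ (2 * T ^ (-a)) * (v ^ (-1 - ε) * T ^ ε) := by gcongr
      _ = 2 * (T ^ (-a) * T ^ ε) * v ^ (-1 - ε) := by ring
      _ = 2 * T ^ (-(a - ε)) * v ^ (-1 - ε) := by
          rw [← Real.rpow_add hT]; congr 3; ring
      _ ≤ _ := by gcongr; linarith

lemma integral_rpow_neg_one_sub_le {ε T : ℝ} (hε : 0 < ε) (hT : 1 ≤ T) :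
    ∫ t in (1 : ℝ)..T, t ^ (-1 - ε) ≤ 1 / ε := by
  have h0 : (0 : ℝ) ∉ Set.uIcc 1 T := by
    rw [Set.uIcc_of_le hT]
    exact fun h => absurd h.1 (by norm_num)
  rw [integral_rpow (Or.inr ⟨by linarith, h0⟩)]
  have hP : 0 < T ^ (-ε) := Real.rpow_pos_of_pos (by linarith) _
  rw [show -1 - ε + 1 = -ε by ring, Real.one_rpow, div_neg, ← neg_div, neg_sub]
  gcongr
  linarith

/-- Second regional estimate in the proof of the paper's integral convergence lemma (the
region where `x + y ≥ 0` and `y ≤ 0`): for `ε ∈ (0, 1/8)` there is `C > 0` such that for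
all `x ≥ 0`, `∫_{−x}^0 (1 + (x+y))^{−(1/2−ε)} (1−y)⁻¹ dy ≤ C (1+x)^{−(1/2−2ε)}`. -/
theorem stmt10 (ε : ℝ) (hε0 : 0 < ε) (hε1 : ε < 1 / 8) :
    ∃ C : ℝ, 0 < C ∧ ∀ x : ℝ, 0 ≤ x →
      (∫ y in Set.Icc (-x) (0 : ℝ), (1 + (x + y)) ^ (-(1 / 2 - ε)) * (1 - y)⁻¹) ≤
        C * (1 + x) ^ (-(1 / 2 - 2 * ε)) := by
  refine ⟨4 / ε, by positivity, fun x hx => ?_⟩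
  have hx' : -x ≤ 0 := by linarith
  have hP : 0 < (1 + x) ^ (-(1 / 2 - 2 * ε)) := Real.rpow_pos_of_pos (by linarith) _
  have hpow : ∀ p : ℝ, ContinuousOn (fun y : ℝ => (1 + (x + y)) ^ p) (Set.Icc (-x) 0) :=
    fun p => ContinuousOn.rpow_const (by fun_prop) fun y hy => Or.inl (by linarith [hy.1])
  have hpow' : ∀ p : ℝ, ContinuousOn (fun y : ℝ => (1 - y) ^ p) (Set.Icc (-x) 0) :=
    fun p => ContinuousOn.rpow_const (by fun_prop) fun y hy => Or.inl (by linarith [hy.2])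
  have hinv : ContinuousOn (fun y : ℝ => (1 - y)⁻¹) (Set.Icc (-x) 0) :=
    ContinuousOn.inv₀ (by fun_prop) fun y hy => by linarith [hy.2]
  have iu : IntervalIntegrable (fun y : ℝ => (1 + (x + y)) ^ (-1 - ε)) volume (-x) 0 :=
    (hpow _).intervalIntegrable_of_Icc hx'
  have iv : IntervalIntegrable (fun y : ℝ => (1 - y) ^ (-1 - ε)) volume (-x) 0 :=
    (hpow' _).intervalIntegrable_of_Icc hx'
  have eu : ∫ y in (-x)..0, (1 + (x + y)) ^ (-1 - ε) ≤ 1 / ε := by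
    have := intervalIntegral.integral_comp_add_left (a := -x) (b := 0)
      (fun t : ℝ => t ^ (-1 - ε)) (1 + x)
    simp only [add_assoc, add_neg_cancel, add_zero] at this
    rw [this]
    exact integral_rpow_neg_one_sub_le hε0 (by linarith)
  have ev : ∫ y in (-x)..0, (1 - y) ^ (-1 - ε) ≤ 1 / ε := by
    rw [intervalIntegral.integral_comp_sub_left (fun t : ℝ => t ^ (-1 - ε)) 1, sub_zero,
      sub_neg_eq_add]
    exact integral_rpow_neg_one_sub_le hε0 (by linarith)
  rw [integral_Icc_eq_integral_Ioc, ← intervalIntegral.integral_of_le hx']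
  calc ∫ y in (-x)..0, (1 + (x + y)) ^ (-(1 / 2 - ε)) * (1 - y)⁻¹
      ≤ ∫ y in (-x)..0, 2 * (1 + x) ^ (-(1 / 2 - 2 * ε)) *
          ((1 + (x + y)) ^ (-1 - ε) + (1 - y) ^ (-1 - ε)) := by
        refine intervalIntegral.integral_mono_on hx'
          (((hpow _).mul hinv).intervalIntegrable_of_Icc hx') ((iu.add iv).const_mul _)
          fun y hy => ?_
        rw [show -(1 / 2 - 2 * ε) = -((1 / 2 - ε) - ε) by ring]
        apply rpow_mul_inv_le_of_add_ge hε0 <;> linarith [hy.1, hy.2]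
    _ = 2 * (1 + x) ^ (-(1 / 2 - 2 * ε)) * ((∫ y in (-x)..0, (1 + (x + y)) ^ (-1 - ε)) +
          ∫ y in (-x)..0, (1 - y) ^ (-1 - ε)) := by
        rw [intervalIntegral.integral_const_mul, intervalIntegral.integral_add iu iv]
    _ ≤ 2 * (1 + x) ^ (-(1 / 2 - 2 * ε)) * (1 / ε + 1 / ε) := by gcongr
    _ = 4 / ε * (1 + x) ^ (-(1 / 2 - 2 * ε)) := by ring
end

section
/- For every ε ∈ (0, 1/8) there exists a constant C > 0 such that for all real x ≥ 0, the function y ↦ (1 + x + y)^{−(1/2 − ε)} (1 + y)^{−1} is Lebesgue-integrable on [0, ∞) and ∫_0^∞ (1 + x + y)^{−(1/2 − ε)} (1 + y)^{−1} dy ≤ C (1 + x)^{−(1/2 − 2ε)}. -/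
open MeasureTheory

/-!
Splitting the exponent as `-(1/2 - ε) = -(1/2 - 2ε) + (-ε)` and using that `1 + x + y` dominates
both `1 + x` and `1 + y`, the integrand is at most `(1+x)^{-(1/2-2ε)} (1+y)^{-1-ε}`. The factor
in `y` is integrable on `[0, ∞)` and independent of `x`, so its integral serves as the constant.
-/

/-- The pointwise bound separating the variables; `ε ≤ 1/4` makes `-(1/2 - 2ε)` nonpositive. -/
lemma integrand_le {ε x y : ℝ} (hε0 : 0 < ε) (hε1 : ε ≤ 1 / 4) (hx : 0 ≤ x) (hy : 0 ≤ y) :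
    (1 + x + y) ^ (-(1 / 2 - ε)) * (1 + y)⁻¹ ≤
      (1 + x) ^ (-(1 / 2 - 2 * ε)) * (y + 1) ^ (-1 - ε) := by
  have hxy : 0 < 1 + x + y := by linarith
  have hy1 : 0 < 1 + y := by linarith
  have h1 : (1 + x + y) ^ (-(1 / 2 - 2 * ε)) ≤ (1 + x) ^ (-(1 / 2 - 2 * ε)) :=
    Real.rpow_le_rpow_of_nonpos (by linarith) (by linarith) (by linarith)
  have h2 : (1 + x + y) ^ (-ε) ≤ (1 + y) ^ (-ε) :=
    Real.rpow_le_rpow_of_nonpos hy1 (by linarith) (by linarith)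
  calc (1 + x + y) ^ (-(1 / 2 - ε)) * (1 + y)⁻¹
      = (1 + x + y) ^ (-(1 / 2 - 2 * ε)) * (1 + x + y) ^ (-ε) * (1 + y)⁻¹ := by
        rw [← Real.rpow_add hxy]; ring_nf
    _ ≤ (1 + x) ^ (-(1 / 2 - 2 * ε)) * (1 + y) ^ (-ε) * (1 + y)⁻¹ := by gcongr
    _ = (1 + x) ^ (-(1 / 2 - 2 * ε)) * (y + 1) ^ (-1 - ε) := by
        rw [mul_assoc, ← Real.rpow_neg_one (1 + y), ← Real.rpow_add hy1, add_comm y 1]; ring_nf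

/-- Third regional estimate in the proof of the paper's integral convergence lemma (the
region where `x + y` and `y` are both positive): for `ε ∈ (0, 1/8)` there is `C > 0` such
that for all `x ≥ 0`, the function `y ↦ (1 + x + y)^{−(1/2−ε)} (1+y)⁻¹` is integrable on
`[0, ∞)` and `∫_0^∞ (1 + x + y)^{−(1/2−ε)} (1+y)⁻¹ dy ≤ C (1+x)^{−(1/2−2ε)}`. -/
theorem stmt11 (ε : ℝ) (hε0 : 0 < ε) (hε1 : ε < 1 / 8) :
    ∃ C : ℝ, 0 < C ∧ ∀ x : ℝ, 0 ≤ x →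
      IntegrableOn (fun y : ℝ => (1 + x + y) ^ (-(1 / 2 - ε)) * (1 + y)⁻¹)
        (Set.Ici (0 : ℝ)) ∧
      (∫ y in Set.Ici (0 : ℝ), (1 + x + y) ^ (-(1 / 2 - ε)) * (1 + y)⁻¹) ≤
        C * (1 + x) ^ (-(1 / 2 - 2 * ε)) := by
  have hI : IntegrableOn (fun y : ℝ => (y + 1) ^ (-1 - ε)) (Set.Ici (0 : ℝ)) :=
    (integrableOn_Ici_iff_integrableOn_Ioi).mpr
      (integrableOn_add_rpow_Ioi_of_lt (by linarith) (by norm_num))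
  have hI0 : 0 ≤ ∫ y in Set.Ici (0 : ℝ), (y + 1) ^ (-1 - ε) :=
    setIntegral_nonneg measurableSet_Ici fun y hy =>
      Real.rpow_nonneg (by linarith [Set.mem_Ici.mp hy]) _
  -- Adding `1` makes positivity of the constant immediate.
  refine ⟨(∫ y in Set.Ici (0 : ℝ), (y + 1) ^ (-1 - ε)) + 1, by linarith, fun x hx => ?_⟩
  have hdom := hI.const_mul ((1 + x) ^ (-(1 / 2 - 2 * ε)))
  have hle : ∀ y ∈ Set.Ici (0 : ℝ), (1 + x + y) ^ (-(1 / 2 - ε)) * (1 + y)⁻¹ ≤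
      (1 + x) ^ (-(1 / 2 - 2 * ε)) * (y + 1) ^ (-1 - ε) := fun y hy =>
    integrand_le hε0 (by linarith) hx hy
  have hint : IntegrableOn (fun y : ℝ => (1 + x + y) ^ (-(1 / 2 - ε)) * (1 + y)⁻¹)
      (Set.Ici (0 : ℝ)) := by
    refine Integrable.mono' hdom (Measurable.aestronglyMeasurable (by fun_prop)) ?_
    refine (ae_restrict_iff' measurableSet_Ici).mpr (ae_of_all _ fun y hy => ?_)
    have hy0 : 0 ≤ y := hy
    rw [Real.norm_of_nonneg (by positivity)]
    exact hle y hy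
  refine ⟨hint, (setIntegral_mono_on hint hdom measurableSet_Ici hle).trans ?_⟩
  have hx1 : 0 ≤ (1 + x) ^ (-(1 / 2 - 2 * ε)) := by positivity
  rw [integral_const_mul]
  linarith
end

section
/- Let E and F be real normed vector spaces, u₀ ∈ E, and δ, L > 0 constants satisfying 2δL·e^{2δL} ≤ 1/8 and e^{2δL} ≤ 2. Let B denote the closed ball of radius δ about u₀. Suppose Ψ : E → ℝ is strictly positive on B and satisfies |log Ψ(x) − log Ψ(y)| ≤ L‖x − y‖ for all x, y ∈ B, and suppose ψ : E → F is differentiable at every point of B with Fréchet derivative satisfying ‖Dψ(x)‖ ≤ L·Ψ(x) for all x ∈ B. Then: (i) Ψ(y) ≤ 2Ψ(x) for all x, y ∈ B; and (ii) if ‖ψ(y)‖ ≤ (1/4)Ψ(y) for some y ∈ B, then ‖ψ(x)‖ ≤ (3/4)Ψ(x) for all x ∈ B. -/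
/-!
Two points of the ball are at distance at most `2δ`, so the Lipschitz bound on `log Ψ` gives the
Harnack-type inequality `Ψ y ≤ exp (2δL) * Ψ x`; with `exp (2δL) ≤ 2` this is the doubling
property. For the dichotomy, fix `x`: the Harnack inequality bounds the derivative of `ψ` on the
whole ball by `L * exp (2δL) * Ψ x`, so by the mean value inequality on the (convex) ball `ψ`
oscillates by at most `2δL * exp (2δL) * Ψ x ≤ Ψ x / 8`. Hence
`‖ψ x‖ ≤ Ψ y / 4 + Ψ x / 8 ≤ Ψ x / 2 + Ψ x / 8 ≤ 3 / 4 * Ψ x`.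
-/

/-- Abstract content of Lemma 4.1 (alternative) of the paper. On a closed ball `B` of
radius `δ` about `u₀`, a strictly positive control function `Ψ` whose logarithm is
`L`-Lipschitz doubles at most (i), and any `ψ` whose derivative is dominated by `L·Ψ`
satisfies a `3/4 – 1/4` dichotomy relative to `Ψ` (ii), provided
`2δL e^{2δL} ≤ 1/8` and `e^{2δL} ≤ 2`. -/
theorem stmt13 {E F : Type*} [NormedAddCommGroup E] [NormedSpace ℝ E]
    [NormedAddCommGroup F] [NormedSpace ℝ F]
    (u₀ : E) (δ L : ℝ) (hδ : 0 < δ) (hL : 0 < L)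
    (hsmall : 2 * δ * L * Real.exp (2 * δ * L) ≤ 1 / 8)
    (hexp : Real.exp (2 * δ * L) ≤ 2)
    (Ψ : E → ℝ) (ψ : E → F) (Dψ : E → E →L[ℝ] F)
    (hΨpos : ∀ x ∈ Metric.closedBall u₀ δ, 0 < Ψ x)
    (hΨlip : ∀ x ∈ Metric.closedBall u₀ δ, ∀ y ∈ Metric.closedBall u₀ δ,
      |Real.log (Ψ x) - Real.log (Ψ y)| ≤ L * ‖x - y‖)
    (hψdiff : ∀ x ∈ Metric.closedBall u₀ δ, HasFDerivAt ψ (Dψ x) x)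
    (hψbound : ∀ x ∈ Metric.closedBall u₀ δ, ‖Dψ x‖ ≤ L * Ψ x) :
    (∀ x ∈ Metric.closedBall u₀ δ, ∀ y ∈ Metric.closedBall u₀ δ, Ψ y ≤ 2 * Ψ x) ∧
    (∀ y ∈ Metric.closedBall u₀ δ, ‖ψ y‖ ≤ (1 / 4) * Ψ y →
      ∀ x ∈ Metric.closedBall u₀ δ, ‖ψ x‖ ≤ (3 / 4) * Ψ x) := by
  have hdist : ∀ x ∈ Metric.closedBall u₀ δ, ∀ y ∈ Metric.closedBall u₀ δ,
      ‖x - y‖ ≤ 2 * δ := by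
    intro x hx y hy
    rw [← dist_eq_norm]
    have h := dist_triangle_right x y u₀
    rw [Metric.mem_closedBall] at hx hy
    linarith
  have hharnack : ∀ x ∈ Metric.closedBall u₀ δ, ∀ y ∈ Metric.closedBall u₀ δ,
      Ψ y ≤ Real.exp (2 * δ * L) * Ψ x := by
    intro x hx y hy
    have h1 := (le_abs_self _).trans (hΨlip y hy x hx)
    have h2 := mul_le_mul_of_nonneg_left (hdist y hy x hx) hL.le
    calc Ψ y = Real.exp (Real.log (Ψ y)) := (Real.exp_log (hΨpos y hy)).symm
      _ ≤ Real.exp (2 * δ * L + Real.log (Ψ x)) := Real.exp_le_exp.mpr (by linarith)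
      _ = Real.exp (2 * δ * L) * Ψ x := by rw [Real.exp_add, Real.exp_log (hΨpos x hx)]
  have hdouble : ∀ x ∈ Metric.closedBall u₀ δ, ∀ y ∈ Metric.closedBall u₀ δ,
      Ψ y ≤ 2 * Ψ x := fun x hx y hy =>
    (hharnack x hx y hy).trans (mul_le_mul_of_nonneg_right hexp (hΨpos x hx).le)
  refine ⟨hdouble, fun y hy hψy x hx => ?_⟩
  have hΨx := hΨpos x hx
  have hosc : ‖ψ x - ψ y‖ ≤ L * (Real.exp (2 * δ * L) * Ψ x) * ‖x - y‖ :=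
    (convex_closedBall u₀ δ).norm_image_sub_le_of_norm_hasFDerivWithin_le
      (fun z hz => (hψdiff z hz).hasFDerivWithinAt)
      (fun z hz => (hψbound z hz).trans
        (mul_le_mul_of_nonneg_left (hharnack x hx z hz) hL.le)) hy hx
  have hosc' : ‖ψ x - ψ y‖ ≤ 1 / 8 * Ψ x := calc
    ‖ψ x - ψ y‖ ≤ L * (Real.exp (2 * δ * L) * Ψ x) * (2 * δ) :=
      hosc.trans (mul_le_mul_of_nonneg_left (hdist x hx y hy) (by positivity))
    _ = 2 * δ * L * Real.exp (2 * δ * L) * Ψ x := by ring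
    _ ≤ 1 / 8 * Ψ x := mul_le_mul_of_nonneg_right hsmall hΨx.le
  have htri := norm_le_norm_add_norm_sub (ψ y) (ψ x)
  rw [norm_sub_rev] at htri
  linarith [hdouble x hx y hy]
end
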